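/- Every almost two-coloured perfect matching of the graph H has the following three properties: (1) exactly one of the three edges ab, mi, ln is monochromatic; (2) the vertices b, i, l all receive the same colour; (3) the vertices o, p, q, r all receive the colour opposite to that of b, i, l. -/

import Mathlib

/-- An almost two-coloured perfect matching of `G`: a two-colouring (black/white,
modelled by `Bool`) of the vertices in which every vertex of degree at least two
(i.e. having two distinct neighbours) has exactly one neighbour of the same colour. -/
def IsAlmostTCPM {V : Type*} (G : SimpleGraph V) (c : V → Bool) : Prop :=
  ∀ v, (∃ w₁ w₂, w₁ ≠ w₂ ∧ G.Adj v w₁ ∧ G.Adj v w₂) →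
    ∃! w, G.Adj v w ∧ c w = c v

/-- The vertices of the graph `H`. -/
inductive HV | a | b | c | d | e | f | g | h | i | j | k | l | m | n | o | p | q | r
deriving DecidableEq

open HV in
/-- The edges of the graph `H`. -/
def HEdges : List (HV × HV) :=
  [(a,b),(b,c),(b,d),(c,e),(c,f),(e,f),(d,g),(d,h),(g,h),(e,i),(f,j),(g,k),
   (h,l),(m,i),(n,l),(j,k),(i,o),(j,o),(o,q),(k,p),(l,p),(p,r)]

/-- The graph `H`. -/
def HG : SimpleGraph HV := SimpleGraph.fromRel (fun x y => (x, y) ∈ HEdges)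

/-!
Of three mutually adjacent cubic vertices two agree in colour and hence are matched, so the third is
matched to its neighbour off the triangle, and all three outer neighbours have the colour of that
third vertex. Applied to the triangles `cef` and `dgh`, this gives `b`, `i`, `j`, `k`, `l` a common
colour, so `j` is matched to `k`. Hence `o` and `p` have the opposite colour, and are matched to `q`
and `r`. As `fj` and `io` are dichromatic, exactly one of `bc`, `ei` and exactly one of `ei`, `mi`
is monochromatic; thus `mi` is monochromatic iff `bc` is. Symmetrically `ln` is monochromatic iff
`bd` is, and `b` has exactly one partner among `a`, `c`, `d`.
-/

/-- Exactly one of three propositions holds; used to count the monochromatic edges of a triple. -/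
def ExactlyOne (p q r : Prop) : Prop :=
  (p ∧ ¬q ∧ ¬r) ∨ (¬p ∧ q ∧ ¬r) ∨ (¬p ∧ ¬q ∧ r)

section Gadgets

variable {V : Type*}

/-- The vertex `v` is cubic in `G`, with neighbours `x`, `y`, `z`. -/
structure IsCubicAt (G : SimpleGraph V) (v x y z : V) : Prop where
  nodup : [x, y, z].Nodup
  adj_iff : ∀ w, G.Adj v w ↔ w = x ∨ w = y ∨ w = z

/-- A triangle `x`, `y`, `z` of cubic vertices with outer neighbours `u`, `v`, `w` respectively.
The neighbours are listed cyclically, so that rotating the triangle only permutes the fields. -/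
structure IsCubicTriangle (G : SimpleGraph V) (x y z u v w : V) : Prop where
  cubic_x : IsCubicAt G x y z u
  cubic_y : IsCubicAt G y z x v
  cubic_z : IsCubicAt G z x y w

/-- One of the two halves of `H` hanging off the vertex `b`: a triangle `x`, `y`, `z` of cubic
vertices with outer neighbours `b`, `i`, `j`, the last two having a common neighbour `o`. The
remaining neighbours of `i`, `j`, `o` are `m`, `k`, `q`; here `k` is the vertex through which `j`
is joined to the other half. -/
structure IsArm (G : SimpleGraph V) (b x y z i j k m o q : V) : Prop where
  triangle : IsCubicTriangle G x y z b i j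
  cubic_i : IsCubicAt G i y m o
  cubic_j : IsCubicAt G j k z o
  cubic_o : IsCubicAt G o i j q

variable {G : SimpleGraph V} {u v w x y z : V}

theorem IsCubicAt.rotate (hv : IsCubicAt G v x y z) : IsCubicAt G v y z x where
  nodup := List.nodup_rotate (n := 1).2 hv.nodup
  adj_iff w := (hv.adj_iff w).trans or_rotate

theorem IsCubicAt.adj_first (hv : IsCubicAt G v x y z) : G.Adj v x :=
  (hv.adj_iff x).2 (.inl rfl)

theorem IsCubicAt.first_ne_second (hv : IsCubicAt G v x y z) : x ≠ y := by
  rintro rfl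
  simpa using hv.nodup

theorem IsCubicTriangle.rotate (hT : IsCubicTriangle G x y z u v w) :
    IsCubicTriangle G y z x v w u :=
  ⟨hT.cubic_y, hT.cubic_z, hT.cubic_x⟩

end Gadgets

theorem bool_eq_or_eq_or_eq (s t u : Bool) : s = t ∨ t = u ∨ u = s := by
  cases s <;> cases t <;> cases u <;> decide

namespace IsAlmostTCPM

variable {V : Type*} {G : SimpleGraph V} {c : V → Bool}
  {b i j k m o q u v w x y z : V}

theorem ne_of_adj_of_eq (hc : IsAlmostTCPM G c) (hx : G.Adj v x) (hy : G.Adj v y)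
    (hxy : x ≠ y) (hxv : c x = c v) : c y ≠ c v :=
  fun hyv ↦ hxy ((hc v ⟨x, y, hxy, hx, hy⟩).unique ⟨hx, hxv⟩ ⟨hy, hyv⟩)

theorem ne_of_isCubicAt_of_eq (hc : IsAlmostTCPM G c) (hv : IsCubicAt G v x y z)
    (hxv : c x = c v) : c y ≠ c v ∧ c z ≠ c v := by
  have hx : G.Adj v x := hv.adj_first
  have hy : G.Adj v y := hv.rotate.adj_first
  have hz : G.Adj v z := hv.rotate.rotate.adj_first
  exact ⟨hc.ne_of_adj_of_eq hx hy hv.first_ne_second hxv,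
    hc.ne_of_adj_of_eq hx hz hv.rotate.rotate.first_ne_second.symm hxv⟩

theorem exactlyOne_of_isCubicAt (hc : IsAlmostTCPM G c) (hv : IsCubicAt G v x y z) :
    ExactlyOne (c x = c v) (c y = c v) (c z = c v) := by
  obtain ⟨partner, ⟨hadj, hcol⟩, -⟩ :=
    hc v ⟨x, y, hv.first_ne_second, hv.adj_first, hv.rotate.adj_first⟩
  rcases (hv.adj_iff partner).1 hadj with rfl | rfl | rfl
  · obtain ⟨hy, hz⟩ := hc.ne_of_isCubicAt_of_eq hv hcol
    exact .inl ⟨hcol, hy, hz⟩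
  · obtain ⟨hz, hx⟩ := hc.ne_of_isCubicAt_of_eq hv.rotate hcol
    exact .inr (.inl ⟨hx, hcol, hz⟩)
  · obtain ⟨hx, hy⟩ := hc.ne_of_isCubicAt_of_eq hv.rotate.rotate hcol
    exact .inr (.inr ⟨hx, hy, hcol⟩)

theorem eq_of_isCubicAt_of_ne (hc : IsAlmostTCPM G c) (hv : IsCubicAt G v x y z)
    (hxv : c x ≠ c v) (hyv : c y ≠ c v) : c z = c v := by
  simpa only [ExactlyOne, hxv, hyv, false_and, and_false, not_false_eq_true, true_and, false_or]
    using hc.exactlyOne_of_isCubicAt hv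

theorem eq_not_of_isCubicTriangle_of_eq (hc : IsAlmostTCPM G c)
    (hT : IsCubicTriangle G x y z u v w) (hxy : c x = c y) :
    c z = !c x ∧ c u = !c x ∧ c v = !c x ∧ c w = !c x := by
  obtain ⟨hzx, hux⟩ := hc.ne_of_isCubicAt_of_eq hT.cubic_x hxy.symm
  obtain ⟨hvy, -⟩ := hc.ne_of_isCubicAt_of_eq hT.cubic_y.rotate hxy
  have hwz : c w = c z := hc.eq_of_isCubicAt_of_ne hT.cubic_z hzx.symm (hxy ▸ hzx.symm)
  simp only [Bool.eq_not, hwz]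
  exact ⟨hzx, hux, hxy ▸ hvy, hzx⟩

theorem outer_eq_of_isCubicTriangle (hc : IsAlmostTCPM G c)
    (hT : IsCubicTriangle G x y z u v w) : c u = c v ∧ c v = c w := by
  obtain hxy | hyz | hzx := bool_eq_or_eq_or_eq (c x) (c y) (c z)
  · obtain ⟨-, hu, hv, hw⟩ := hc.eq_not_of_isCubicTriangle_of_eq hT hxy
    exact ⟨hu.trans hv.symm, hv.trans hw.symm⟩
  · obtain ⟨-, hv, hw, hu⟩ := hc.eq_not_of_isCubicTriangle_of_eq hT.rotate hyz
    exact ⟨hu.trans hv.symm, hv.trans hw.symm⟩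
  · obtain ⟨-, hw, hu, hv⟩ := hc.eq_not_of_isCubicTriangle_of_eq hT.rotate.rotate hzx
    exact ⟨hu.trans hv.symm, hv.trans hw.symm⟩

theorem exactlyOne_of_isCubicTriangle (hc : IsAlmostTCPM G c)
    (hT : IsCubicTriangle G x y z u v w) :
    ExactlyOne (c x = c u) (c y = c v) (c z = c w) := by
  obtain hxy | hyz | hzx := bool_eq_or_eq_or_eq (c x) (c y) (c z)
  · obtain ⟨hz, hu, hv, hw⟩ := hc.eq_not_of_isCubicTriangle_of_eq hT hxy
    simp [ExactlyOne, hz, hu, hv, hw, hxy]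
  · obtain ⟨hx, hv, hw, hu⟩ := hc.eq_not_of_isCubicTriangle_of_eq hT.rotate hyz
    simp [ExactlyOne, hx, hu, hv, hw, hyz]
  · obtain ⟨hy, hw, hu, hv⟩ := hc.eq_not_of_isCubicTriangle_of_eq hT.rotate.rotate hzx
    simp [ExactlyOne, hy, hu, hv, hw, hzx]

theorem eq_not_of_isArm (hc : IsAlmostTCPM G c) (hA : IsArm G b x y z i j k m o q)
    (hkj : c k = c j) : c o = !c b ∧ c q = !c b := by
  obtain ⟨hbi, hij⟩ := hc.outer_eq_of_isCubicTriangle hA.triangle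
  have hoj : c o ≠ c j := (hc.ne_of_isCubicAt_of_eq hA.cubic_j hkj).2
  have hqo : c q = c o := hc.eq_of_isCubicAt_of_ne hA.cubic_o (hij ▸ hoj.symm) hoj.symm
  simp only [Bool.eq_not, hqo, hbi, hij]
  exact ⟨hoj, hoj⟩

theorem eq_iff_eq_of_isArm (hc : IsAlmostTCPM G c) (hA : IsArm G b x y z i j k m o q)
    (hkj : c k = c j) : c m = c i ↔ c x = c b := by
  obtain ⟨-, hij⟩ := hc.outer_eq_of_isCubicTriangle hA.triangle
  obtain ⟨hzj, hoj⟩ := hc.ne_of_isCubicAt_of_eq hA.cubic_j hkj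
  have hoi : c o ≠ c i := hij ▸ hoj
  have exactlyOne_bx_yi := hc.exactlyOne_of_isCubicTriangle hA.triangle
  have exactlyOne_yi_mi := hc.exactlyOne_of_isCubicAt hA.cubic_i
  unfold ExactlyOne at exactlyOne_bx_yi exactlyOne_yi_mi
  tauto

end IsAlmostTCPM

theorem stmt_3_general {V : Type*} {G : SimpleGraph V} {c : V → Bool}
    {a b i j k l m n o p q r x₁ y₁ z₁ x₂ y₂ z₂ : V} (hc : IsAlmostTCPM G c)
    (hb : IsCubicAt G b a x₁ x₂) (hA₁ : IsArm G b x₁ y₁ z₁ i j k m o q)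
    (hA₂ : IsArm G b x₂ y₂ z₂ l k j n p r) :
    ExactlyOne (c a = c b) (c m = c i) (c l = c n) ∧ (c b = c i ∧ c i = c l) ∧
      (c o = !c b ∧ c p = !c b ∧ c q = !c b ∧ c r = !c b) := by
  obtain ⟨hbi, hij⟩ := hc.outer_eq_of_isCubicTriangle hA₁.triangle
  obtain ⟨hbl, hlk⟩ := hc.outer_eq_of_isCubicTriangle hA₂.triangle
  have hjk : c j = c k := by rw [← hij, ← hbi, hbl, hlk]
  obtain ⟨ho, hq⟩ := hc.eq_not_of_isArm hA₁ hjk.symm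
  obtain ⟨hp, hr⟩ := hc.eq_not_of_isArm hA₂ hjk
  refine ⟨?_, ⟨hbi, hbi.symm.trans hbl⟩, ho, hp, hq, hr⟩
  rw [hc.eq_iff_eq_of_isArm hA₁ hjk.symm, eq_comm (a := c l), hc.eq_iff_eq_of_isArm hA₂ hjk]
  exact hc.exactlyOne_of_isCubicAt hb

theorem isCubicAt_HG_b : IsCubicAt HG .b .a .c .d := by
  refine ⟨by decide, fun w ↦ ?_⟩
  cases w <;> simp [HG, HEdges]

theorem isArm_HG_cef : IsArm HG .b .c .e .f .i .j .k .m .o .q := by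
  refine ⟨⟨?_, ?_, ?_⟩, ?_, ?_, ?_⟩ <;> refine ⟨by decide, fun w ↦ ?_⟩ <;>
    cases w <;> simp [HG, HEdges]

theorem isArm_HG_dhg : IsArm HG .b .d .h .g .l .k .j .n .p .r := by
  refine ⟨⟨?_, ?_, ?_⟩, ?_, ?_, ?_⟩ <;> refine ⟨by decide, fun w ↦ ?_⟩ <;>
    cases w <;> simp [HG, HEdges]

/-- Any almost two-coloured perfect matching of `H` satisfies:
(1) exactly one of the edges `ab`, `mi`, `ln` is monochromatic;
(2) `b`, `i`, `l` receive the same colour;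
(3) `o`, `p`, `q`, `r` receive the colour opposite to that of `b`, `i`, `l`. -/
theorem stmt_3 (c : HV → Bool) (hc : IsAlmostTCPM HG c) :
    (((c HV.a = c HV.b) ∧ ¬(c HV.m = c HV.i) ∧ ¬(c HV.l = c HV.n)) ∨
     (¬(c HV.a = c HV.b) ∧ (c HV.m = c HV.i) ∧ ¬(c HV.l = c HV.n)) ∨
     (¬(c HV.a = c HV.b) ∧ ¬(c HV.m = c HV.i) ∧ (c HV.l = c HV.n))) ∧
    (c HV.b = c HV.i ∧ c HV.i = c HV.l) ∧
    (c HV.o = !(c HV.b) ∧ c HV.p = !(c HV.b) ∧ c HV.q = !(c HV.b) ∧ c HV.r = !(c HV.b)) := by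
  exact stmt_3_general hc isCubicAt_HG_b isArm_HG_cef isArm_HG_dhg
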